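/- (PAC-Bayes bound) Let Z be a measurable space, D a probability distribution on Z, and ℓ : Θ → Z → [0,1] a jointly measurable loss function on a measurable hypothesis space Θ. For a hypothesis h define the true risk R(h) := E_{z∼D}[ℓ(h, z)] and, for a sample S = (z₁, …, z_N), the empirical risk R̂(h) := (1/N) Σᵢ ℓ(h, zᵢ). Fix a prior probability measure P on Θ and δ ∈ (0,1). Then with probability at least 1 − δ over the draw of an i.i.d. sample S of size N from D, simultaneously for every probability measure Q on Θ: E_{h∼Q}[R(h)] ≤ E_{h∼Q}[R̂(h)] + sqrt( (KL(Q ‖ P) + log(2√N/δ)) / (2N) ). -/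

import Mathlib

/-! The proof is a method of mixtures. By Hoeffding's lemma the rescaled generalization gap
`X = 2 √N (R - R̂)` satisfies `E[exp (t X - t² / 2)] ≤ 1` for all `t`, so integrating over
`t ∈ [0, 2√N]` and over `h ∼ P`, Markov's inequality shows that the mixture
`∫ h, ∫ t in 0..2√N, exp (t X h - t² / 2) ∂P` is at most `2√N / δ` with probability at least
`1 - δ`. For each `t`, the Donsker–Varadhan inequality moves from `P` to an arbitrary `Q` at the
cost of a factor `exp (KL(Q ‖ P))`, which replaces `X h` by its `Q`-mean `m ≤ 2√N`. Completing the
square, `∫ t in 0..2√N, exp (t m - t² / 2)` is at least `exp (m² / 2)` when `m ≥ 0`, whence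
`m² / 2 ≤ KL(Q ‖ P) + log (2√N / δ)`. -/

open MeasureTheory Real
open scoped Classical

/-- The Kullback–Leibler divergence `KL(Q ‖ P)`, equal to `∫ log (dQ/dP) dQ` when
`Q ≪ P` and the log-likelihood ratio is `Q`-integrable, and `+∞` otherwise. -/
noncomputable def klDiv {α : Type*} [MeasurableSpace α] (Q P : Measure α) : EReal :=
  if Q ≪ P ∧ Integrable (MeasureTheory.llr Q P) Q
  then ((∫ x, MeasureTheory.llr Q P x ∂Q : ℝ) : EReal)
  else ⊤

section KullbackLeibler

variable {Θ : Type*} [MeasurableSpace Θ] {P Q : Measure Θ}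

lemma klDiv_ne_top_iff : klDiv Q P ≠ ⊤ ↔ Q ≪ P ∧ Integrable (llr Q P) Q := by
  unfold klDiv
  split_ifs with h <;> simp [h]

lemma toReal_klDiv (hKL : klDiv Q P ≠ ⊤) : (klDiv Q P).toReal = ∫ x, llr Q P x ∂Q := by
  rw [klDiv, if_pos (klDiv_ne_top_iff.1 hKL), EReal.toReal_coe]

variable [IsProbabilityMeasure P] [IsProbabilityMeasure Q]

lemma integral_le_toReal_klDiv_add_log_integral_exp (hKL : klDiv Q P ≠ ⊤) {f : Θ → ℝ}
    (hfQ : Integrable f Q) (hfP : Integrable (fun h => exp (f h)) P) :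
    ∫ h, f h ∂Q ≤ (klDiv Q P).toReal + log (∫ h, exp (f h) ∂P) := by
  obtain ⟨hQP, hllr⟩ := klDiv_ne_top_iff.1 hKL
  have := isProbabilityMeasure_tilted hfP
  have gibbs : 0 ≤ ∫ h, llr Q (P.tilted f) h ∂Q := by
    simpa using InformationTheory.integral_llr_add_sub_measure_univ_nonneg
      (hQP.trans (absolutelyContinuous_tilted hfP))
      (integrable_llr_tilted_right hQP hfQ hllr hfP)
  rw [integral_llr_tilted_right hQP hfQ hfP hllr] at gibbs
  rw [toReal_klDiv hKL]
  linarith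

lemma ofReal_exp_integral_le_exp_klDiv_mul_lintegral_exp (hKL : klDiv Q P ≠ ⊤) {f : Θ → ℝ}
    (hf : AEMeasurable f P) (hfQ : Integrable f Q) :
    ENNReal.ofReal (exp (∫ h, f h ∂Q)) ≤
      ENNReal.ofReal (exp (klDiv Q P).toReal) * ∫⁻ h, ENNReal.ofReal (exp (f h)) ∂P := by
  by_cases hfP : Integrable (fun h => exp (f h)) P
  · rw [← ofReal_integral_eq_lintegral_ofReal hfP (.of_forall fun h => (exp_pos _).le),
      ← ENNReal.ofReal_mul (exp_pos _).le]
    gcongr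
    rw [← exp_log (integral_exp_pos hfP), ← exp_add]
    exact exp_le_exp.2 (integral_le_toReal_klDiv_add_log_integral_exp hKL hfQ hfP)
  · have htop : ∫⁻ h, ENNReal.ofReal (exp (f h)) ∂P = ⊤ := by
      contrapose! hfP
      exact (lintegral_ofReal_ne_top_iff_integrable (by fun_prop)
        (.of_forall fun h => (exp_pos _).le)).1 hfP
    rw [htop, ENNReal.mul_top (by simpa using exp_pos _)]
    exact le_top

end KullbackLeibler

section GaussianIntegral

-- The tangent line of `w ↦ exp (-w)` at `1 / 2` turns the integral up to `√3` into `√(3 / e) ≥ 1`.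
lemma one_le_integral_exp_neg_sq_div_two {b : ℝ} (hb : √3 ≤ b) :
    1 ≤ ∫ t in (0 : ℝ)..b, exp (-(t ^ 2 / 2)) := by
  have tangent : ∀ t : ℝ, exp (-(1 / 2)) * (3 / 2 - t ^ 2 / 2) ≤ exp (-(t ^ 2 / 2)) := by
    intro t
    calc exp (-(1 / 2)) * (3 / 2 - t ^ 2 / 2)
        ≤ exp (-(1 / 2)) * exp (1 / 2 - t ^ 2 / 2) := by
          gcongr
          linarith [add_one_le_exp (1 / 2 - t ^ 2 / 2)]
      _ = exp (-(t ^ 2 / 2)) := by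
          rw [← exp_add]
          ring_nf
  have sqrt_cube : √3 ^ 3 = 3 * √3 := by
    rw [pow_succ, sq_sqrt zero_le_three]
  have exp_half_le : exp (1 / 2) ≤ √3 := by
    apply le_sqrt_of_sq_le
    calc exp (1 / 2) ^ 2 = exp 1 := by rw [← exp_nat_mul]; norm_num
      _ ≤ 3 := exp_one_lt_three.le
  calc (1 : ℝ) = exp (-(1 / 2)) * exp (1 / 2) := by rw [← exp_add]; simp
    _ ≤ exp (-(1 / 2)) * √3 := by gcongr
    _ = ∫ t in (0 : ℝ)..√3, exp (-(1 / 2)) * (3 / 2 - t ^ 2 / 2) := by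
        rw [intervalIntegral.integral_const_mul, intervalIntegral.integral_sub
          (by simp) (Continuous.intervalIntegrable (by fun_prop) _ _)]
        simp only [intervalIntegral.integral_div, integral_pow, intervalIntegral.integral_const,
          smul_eq_mul, sqrt_cube]
        ring
    _ ≤ ∫ t in (0 : ℝ)..√3, exp (-(t ^ 2 / 2)) :=
        intervalIntegral.integral_mono_on (sqrt_nonneg 3)
          (Continuous.intervalIntegrable (by fun_prop) _ _)
          (Continuous.intervalIntegrable (by fun_prop) _ _) fun t _ => tangent t
    _ ≤ ∫ t in (0 : ℝ)..b, exp (-(t ^ 2 / 2)) :=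
        intervalIntegral.integral_mono_interval le_rfl (sqrt_nonneg 3) hb
          (.of_forall fun t => (exp_pos _).le) (Continuous.intervalIntegrable (by fun_prop) _ _)

lemma integral_le_integral_comp_sub_of_even {g : ℝ → ℝ} (hg : Continuous g)
    (heven : g.Even) (hanti : AntitoneOn g (Set.Ici 0)) {b x : ℝ} (hx : x ∈ Set.Icc 0 b) :
    ∫ t in (0 : ℝ)..b, g t ≤ ∫ t in (0 : ℝ)..b, g (t - x) := by
  have hgx : Continuous fun t => g (t - x) := by fun_prop
  have below : ∫ t in (0 : ℝ)..x, g (t - x) = ∫ t in (0 : ℝ)..x, g t := by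
    calc ∫ t in (0 : ℝ)..x, g (t - x) = ∫ t in (0 : ℝ)..x, g (x - t) := by
          simp_rw [← heven (x - _), neg_sub]
      _ = ∫ t in (0 : ℝ)..x, g t := by
          rw [intervalIntegral.integral_comp_sub_left, sub_self, sub_zero]
  have above : ∫ t in x..b, g t ≤ ∫ t in x..b, g (t - x) := by
    refine intervalIntegral.integral_mono_on hx.2 (hg.intervalIntegrable _ _)
      (hgx.intervalIntegrable _ _) fun t ht => ?_
    exact hanti (sub_nonneg.2 ht.1) (hx.1.trans ht.1) (sub_le_self t hx.1)
  rw [← intervalIntegral.integral_add_adjacent_intervals (hg.intervalIntegrable 0 x)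
      (hg.intervalIntegrable x b),
    ← intervalIntegral.integral_add_adjacent_intervals (hgx.intervalIntegrable 0 x)
      (hgx.intervalIntegrable x b), below]
  gcongr

lemma antitoneOn_exp_neg_sq_div_two :
    AntitoneOn (fun t : ℝ => exp (-(t ^ 2 / 2))) (Set.Ici 0) := by
  intro s hs t _ hst
  have hs : 0 ≤ s := hs
  dsimp only
  gcongr

lemma exp_sq_div_two_le_integral {b x : ℝ} (hb : √3 ≤ b) (hx : x ∈ Set.Icc 0 b) :
    exp (x ^ 2 / 2) ≤ ∫ t in (0 : ℝ)..b, exp (t * x - t ^ 2 / 2) := by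
  have complete_square : ∀ t : ℝ,
      exp (x ^ 2 / 2) * exp (-((t - x) ^ 2 / 2)) = exp (t * x - t ^ 2 / 2) := by
    intro t
    rw [← exp_add]
    ring_nf
  have shift := integral_le_integral_comp_sub_of_even (by fun_prop)
    (fun _ => by simp only [neg_sq]) antitoneOn_exp_neg_sq_div_two hx
  calc exp (x ^ 2 / 2) ≤ exp (x ^ 2 / 2) * ∫ t in (0 : ℝ)..b, exp (-((t - x) ^ 2 / 2)) :=
        le_mul_of_one_le_right (exp_pos _).le
          ((one_le_integral_exp_neg_sq_div_two hb).trans shift)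
    _ = ∫ t in (0 : ℝ)..b, exp (t * x - t ^ 2 / 2) := by
        simp_rw [← intervalIntegral.integral_const_mul, complete_square]

end GaussianIntegral

/-- The exponential supermartingale weights `exp (t x - t² / 2)` of a random variable that is
sub-Gaussian with variance proxy `1`, mixed over `t ∈ [0, b]` with respect to Lebesgue measure
(not normalized to a probability). It takes values in `ℝ≥0∞` so that Tonelli's theorem applies
without integrability conditions. -/
noncomputable def gaussianMixture (b x : ℝ) : ENNReal :=
  ∫⁻ t in Set.Icc 0 b, ENNReal.ofReal (exp (t * x - t ^ 2 / 2))

section GaussianMixture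

open ProbabilityTheory

lemma measurable_gaussianMixture (b : ℝ) : Measurable (gaussianMixture b) := by
  unfold gaussianMixture
  exact Measurable.lintegral_prod_right' (f := fun p : ℝ × ℝ =>
    ENNReal.ofReal (exp (p.2 * p.1 - p.2 ^ 2 / 2))) (by fun_prop)

lemma ofReal_exp_sq_div_two_le_gaussianMixture {b x : ℝ} (hb : √3 ≤ b)
    (hx : x ∈ Set.Icc 0 b) :
    ENNReal.ofReal (exp (x ^ 2 / 2)) ≤ gaussianMixture b x := by
  have hint : IntegrableOn (fun t => exp (t * x - t ^ 2 / 2)) (Set.Icc 0 b) :=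
    Continuous.integrableOn_Icc (by fun_prop)
  rw [gaussianMixture, ← ofReal_integral_eq_lintegral_ofReal hint
    (.of_forall fun t => (exp_pos _).le), integral_Icc_eq_integral_Ioc,
    ← intervalIntegral.integral_of_le (hx.1.trans hx.2)]
  exact ENNReal.ofReal_le_ofReal (exp_sq_div_two_le_integral hb hx)

lemma lintegral_exp_mul_sub_sq_div_two_le_one {Ω : Type*} [MeasurableSpace Ω] {μ : Measure Ω}
    {X : Ω → ℝ} (hX : HasSubgaussianMGF X 1 μ) (t : ℝ) :
    ∫⁻ ω, ENNReal.ofReal (exp (t * X ω - t ^ 2 / 2)) ∂μ ≤ 1 := by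
  simp_rw [exp_sub]
  rw [← ofReal_integral_eq_lintegral_ofReal ((hX.integrable_exp_mul t).div_const _)
    (.of_forall fun ω => by positivity), integral_div, ENNReal.ofReal_le_one,
    div_le_one (exp_pos _)]
  simpa [mgf] using hX.mgf_le t

lemma lintegral_gaussianMixture_le {Ω : Type*} [MeasurableSpace Ω] {μ : Measure Ω} [SFinite μ]
    {X : Ω → ℝ} (hX : HasSubgaussianMGF X 1 μ) (b : ℝ) :
    ∫⁻ ω, gaussianMixture b (X ω) ∂μ ≤ ENNReal.ofReal b := by
  have hXm : AEMeasurable X μ := hX.aemeasurable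
  unfold gaussianMixture
  rw [lintegral_lintegral_swap (by simp only [Function.uncurry_def]; fun_prop)]
  calc ∫⁻ t in Set.Icc 0 b, ∫⁻ ω, ENNReal.ofReal (exp (t * X ω - t ^ 2 / 2)) ∂μ
      ≤ ∫⁻ _ in Set.Icc 0 b, 1 :=
        lintegral_mono fun t => lintegral_exp_mul_sub_sq_div_two_le_one hX t
    _ = ENNReal.ofReal b := by simp

variable {Θ : Type*} [MeasurableSpace Θ] {P Q : Measure Θ} [IsProbabilityMeasure P]
  [IsProbabilityMeasure Q]

lemma gaussianMixture_integral_le (hKL : klDiv Q P ≠ ⊤) {f : Θ → ℝ} (hf : AEMeasurable f P)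
    (hfQ : Integrable f Q) (b : ℝ) :
    gaussianMixture b (∫ h, f h ∂Q) ≤
      ENNReal.ofReal (exp (klDiv Q P).toReal) * ∫⁻ h, gaussianMixture b (f h) ∂P := by
  have tilt : ∀ t : ℝ, ENNReal.ofReal (exp (t * ∫ h, f h ∂Q - t ^ 2 / 2)) ≤
      ENNReal.ofReal (exp (klDiv Q P).toReal) *
        ∫⁻ h, ENNReal.ofReal (exp (t * f h - t ^ 2 / 2)) ∂P := by
    intro t
    have hint : ∫ h, (t * f h - t ^ 2 / 2) ∂Q = t * ∫ h, f h ∂Q - t ^ 2 / 2 := by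
      rw [integral_sub (hfQ.const_mul t) (integrable_const _), integral_const_mul]
      simp
    rw [← hint]
    exact ofReal_exp_integral_le_exp_klDiv_mul_lintegral_exp hKL (by fun_prop)
      ((hfQ.const_mul t).sub (integrable_const _))
  unfold gaussianMixture
  rw [lintegral_lintegral_swap (by simp only [Function.uncurry_def]; fun_prop),
    ← lintegral_const_mul' _ _ ENNReal.ofReal_ne_top]
  exact lintegral_mono tilt

lemma integral_le_sqrt_of_lintegral_gaussianMixture_le (hKL : klDiv Q P ≠ ⊤) {f : Θ → ℝ}
    (hf : Measurable f) {b C : ℝ} (hb : √3 ≤ b) (hfb : ∀ h, |f h| ≤ b) (hC : 0 < C)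
    (hmix : ∫⁻ h, gaussianMixture b (f h) ∂P ≤ ENNReal.ofReal C) :
    ∫ h, f h ∂Q ≤ √(2 * ((klDiv Q P).toReal + log C)) := by
  have hfQ : Integrable f Q := .of_bound hf.aestronglyMeasurable b (.of_forall hfb)
  have hmean_le : ∫ h, f h ∂Q ≤ b := by
    simpa using integral_mono hfQ (integrable_const b) fun h => (le_abs_self _).trans (hfb h)
  set m := ∫ h, f h ∂Q
  rcases le_total m 0 with hm | hm
  · exact hm.trans (sqrt_nonneg _)
  have hexp : ENNReal.ofReal (exp (m ^ 2 / 2)) ≤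
      ENNReal.ofReal (exp ((klDiv Q P).toReal + log C)) := by
    calc ENNReal.ofReal (exp (m ^ 2 / 2)) ≤ gaussianMixture b m :=
          ofReal_exp_sq_div_two_le_gaussianMixture hb ⟨hm, hmean_le⟩
      _ ≤ ENNReal.ofReal (exp (klDiv Q P).toReal) * ∫⁻ h, gaussianMixture b (f h) ∂P :=
          gaussianMixture_integral_le hKL hf.aemeasurable hfQ b
      _ ≤ ENNReal.ofReal (exp (klDiv Q P).toReal) * ENNReal.ofReal C := by gcongr
      _ = ENNReal.ofReal (exp ((klDiv Q P).toReal + log C)) := by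
          rw [← ENNReal.ofReal_mul (exp_pos _).le, exp_add, exp_log hC]
  rw [ENNReal.ofReal_le_ofReal_iff (exp_pos _).le, exp_le_exp] at hexp
  exact le_sqrt_of_sq_le (by linarith)

end GaussianMixture

section HighProbability

open ProbabilityTheory

variable {Ω : Type*} [MeasurableSpace Ω] {μ : Measure Ω} [IsProbabilityMeasure μ]

lemma one_sub_le_measure_le_of_lintegral_le {F : Ω → ENNReal} (hF : Measurable F)
    {C δ : ENNReal} (hC : C ≠ 0) (hC' : C ≠ ⊤) (hFC : ∫⁻ ω, F ω ∂μ ≤ δ * C) :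
    1 - δ ≤ μ {ω | F ω ≤ C} := by
  have markov : μ {ω | C ≤ F ω} ≤ δ :=
    (meas_ge_le_lintegral_div hF.aemeasurable hC hC').trans (ENNReal.div_le_of_le_mul hFC)
  calc 1 - δ ≤ 1 - μ {ω | C ≤ F ω} := by gcongr
    _ = μ {ω | C ≤ F ω}ᶜ :=
        (prob_compl_eq_one_sub (measurableSet_le measurable_const hF)).symm
    _ ≤ μ {ω | F ω ≤ C} := measure_mono fun ω (hω : ¬ C ≤ F ω) => (not_le.1 hω).le

lemma one_sub_le_measure_forall_integral_le_sqrt_klDiv {Θ : Type*} [MeasurableSpace Θ]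
    (P : Measure Θ) [IsProbabilityMeasure P] {X : Ω → Θ → ℝ}
    (hX : Measurable (Function.uncurry X))
    (hsub : ∀ h, HasSubgaussianMGF (fun ω => X ω h) 1 μ)
    {b : ℝ} (hb : √3 ≤ b) (hXb : ∀ ω h, |X ω h| ≤ b) {δ : ℝ} (hδ : 0 < δ) :
    ENNReal.ofReal (1 - δ) ≤
      μ {ω | ∀ Q : Measure Θ, IsProbabilityMeasure Q → klDiv Q P ≠ ⊤ →
        ∫ h, X ω h ∂Q ≤ √(2 * ((klDiv Q P).toReal + log (b / δ)))} := by
  have hC : 0 < b / δ := div_pos ((sqrt_pos.2 three_pos).trans_le hb) hδ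
  have hGX : Measurable (Function.uncurry fun ω h => gaussianMixture b (X ω h)) :=
    (measurable_gaussianMixture b).comp hX
  have hmean : ∫⁻ ω, ∫⁻ h, gaussianMixture b (X ω h) ∂P ∂μ ≤
      ENNReal.ofReal δ * ENNReal.ofReal (b / δ) := by
    rw [lintegral_lintegral_swap hGX.aemeasurable, ← ENNReal.ofReal_mul hδ.le,
      mul_div_cancel₀ _ hδ.ne']
    calc ∫⁻ h, ∫⁻ ω, gaussianMixture b (X ω h) ∂μ ∂P ≤ ∫⁻ _, ENNReal.ofReal b ∂P :=
          lintegral_mono fun h => lintegral_gaussianMixture_le (hsub h) b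
      _ = ENNReal.ofReal b := by simp
  rw [ENNReal.ofReal_sub 1 hδ.le, ENNReal.ofReal_one]
  refine (one_sub_le_measure_le_of_lintegral_le hGX.lintegral_prod_right'
    (by simpa using hC) ENNReal.ofReal_ne_top hmean).trans (measure_mono ?_)
  intro ω hω Q _ hKL
  exact integral_le_sqrt_of_lintegral_gaussianMixture_le hKL (hX.comp measurable_prodMk_left)
    hb (hXb ω) hC hω

end HighProbability

section Risk

open ProbabilityTheory

lemma hasSubgaussianMGF_sum_integral_sub_pi {ι : Type*} [Fintype ι] {Z : ι → Type*}
    [∀ i, MeasurableSpace (Z i)] {μ : ∀ i, Measure (Z i)} [∀ i, IsProbabilityMeasure (μ i)]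
    {f : ∀ i, Z i → ℝ} (hf : ∀ i, AEMeasurable (f i) (μ i)) {a b : ι → ℝ}
    (hfab : ∀ i, ∀ᵐ z ∂μ i, f i z ∈ Set.Icc (a i) (b i)) :
    HasSubgaussianMGF (fun S => ∑ i, (∫ z, f i z ∂μ i - f i (S i)))
      (∑ i, (‖b i - a i‖₊ / 2) ^ 2) (Measure.pi μ) := by
  have hcentered : ∀ i, HasSubgaussianMGF
      (fun z => ∫ z, f i z ∂μ i - f i z) ((‖b i - a i‖₊ / 2) ^ 2) (μ i) := fun i => by
    simpa [Pi.neg_def] using (hasSubgaussianMGF_of_mem_Icc (hf i) (hfab i)).neg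
  refine .sum_of_iIndepFun (iIndepFun_pi fun i => (hcentered i).aemeasurable) fun i _ => ?_
  have hmap := measurePreserving_eval μ i
  exact HasSubgaussianMGF.of_map (X := fun z => ∫ z, f i z ∂μ i - f i z) (Y := Function.eval i)
    hmap.measurable.aemeasurable (by rw [hmap.map_eq]; exact hcentered i)

variable {Z Θ : Type*}

/-- The risk `R(h) = E_{z∼D}[ℓ(h, z)]` of a hypothesis. -/
noncomputable def trueRisk [MeasurableSpace Z] (D : Measure Z) (ℓ : Θ → Z → ℝ) (h : Θ) : ℝ :=
  ∫ z, ℓ h z ∂D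

/-- The empirical risk `R̂_S(h)` of a hypothesis on a sample `S`. -/
noncomputable def empiricalRisk {N : ℕ} (ℓ : Θ → Z → ℝ) (S : Fin N → Z) (h : Θ) : ℝ :=
  (1 / (N : ℝ)) * ∑ i, ℓ h (S i)

/-- The generalization gap `R(h) - R̂_S(h)`, rescaled by `2√N` so that Hoeffding's lemma makes it
sub-Gaussian with variance proxy `1` when the loss is `[0, 1]`-valued. -/
noncomputable def scaledGap [MeasurableSpace Z] {N : ℕ} (D : Measure Z) (ℓ : Θ → Z → ℝ)
    (S : Fin N → Z) (h : Θ) : ℝ :=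
  2 * √N * (trueRisk D ℓ h - empiricalRisk ℓ S h)

variable {ℓ : Θ → Z → ℝ} {N : ℕ}

lemma empiricalRisk_mem_Icc {h : Θ} (hℓ01 : ∀ z, ℓ h z ∈ Set.Icc (0 : ℝ) 1) (S : Fin N → Z) :
    empiricalRisk ℓ S h ∈ Set.Icc (0 : ℝ) 1 := by
  have hsum : ∑ i, ℓ h (S i) ≤ N := by
    simpa using Finset.sum_le_card_nsmul Finset.univ _ 1 fun i _ => (hℓ01 (S i)).2
  rw [empiricalRisk, one_div_mul_eq_div]
  exact ⟨div_nonneg (Finset.sum_nonneg fun i _ => (hℓ01 (S i)).1) N.cast_nonneg,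
    div_le_one_of_le₀ hsum N.cast_nonneg⟩

variable [MeasurableSpace Z] {D : Measure Z} [IsProbabilityMeasure D]

lemma trueRisk_mem_Icc {h : Θ} (hℓ : Measurable (ℓ h)) (hℓ01 : ∀ z, ℓ h z ∈ Set.Icc (0 : ℝ) 1) :
    trueRisk D ℓ h ∈ Set.Icc (0 : ℝ) 1 :=
  (convex_Icc 0 1).integral_mem isClosed_Icc (.of_forall hℓ01)
    (.of_mem_Icc 0 1 hℓ.aemeasurable (.of_forall hℓ01))

lemma abs_scaledGap_le {h : Θ} (hℓ : Measurable (ℓ h)) (hℓ01 : ∀ z, ℓ h z ∈ Set.Icc (0 : ℝ) 1)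
    (S : Fin N → Z) : |scaledGap D ℓ S h| ≤ 2 * √N := by
  rw [scaledGap, abs_mul, abs_of_nonneg (by positivity : 0 ≤ 2 * √(N : ℝ))]
  refine mul_le_of_le_one_right (by positivity) ?_
  obtain ⟨hR0, hR1⟩ := trueRisk_mem_Icc (D := D) hℓ hℓ01
  obtain ⟨hE0, hE1⟩ := empiricalRisk_mem_Icc hℓ01 S
  exact abs_sub_le_iff.2 ⟨by linarith, by linarith⟩

lemma hasSubgaussianMGF_scaledGap (hN : 0 < N) {h : Θ} (hℓ : Measurable (ℓ h))
    (hℓ01 : ∀ z, ℓ h z ∈ Set.Icc (0 : ℝ) 1) :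
    HasSubgaussianMGF (fun S => scaledGap D ℓ S h) 1
      (Measure.pi fun _ : Fin N => D) := by
  have hN' : (0 : ℝ) < N := by exact_mod_cast hN
  have hsum := hasSubgaussianMGF_sum_integral_sub_pi (μ := fun _ : Fin N => D)
    (fun _ => hℓ.aemeasurable) (fun _ => .of_forall hℓ01)
  convert! hsum.const_mul (2 * √N / N) using 1
  · ext S
    simp only [scaledGap, trueRisk, empiricalRisk, Finset.sum_sub_distrib, Finset.sum_const,
      Finset.card_univ, Fintype.card_fin, nsmul_eq_mul]
    field_simp
  · apply NNReal.eq
    change (1 : ℝ) = (2 * √N / N) ^ 2 * (∑ _ : Fin N, (‖(1 : ℝ) - 0‖₊ / 2) ^ 2 : NNReal)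
    simp only [sub_zero, nnnorm_one, one_div, inv_pow, Finset.sum_const, Finset.card_univ,
      Fintype.card_fin, nsmul_eq_mul, NNReal.coe_mul, NNReal.coe_natCast, NNReal.coe_inv,
      NNReal.coe_pow, NNReal.coe_ofNat, div_pow, mul_pow, sq_sqrt hN'.le]
    field_simp

variable [MeasurableSpace Θ]

lemma measurable_trueRisk (hℓ : Measurable fun p : Θ × Z => ℓ p.1 p.2) :
    Measurable (trueRisk D ℓ) :=
  hℓ.stronglyMeasurable.integral_prod_right.measurable

lemma measurable_uncurry_empiricalRisk (hℓ : Measurable fun p : Θ × Z => ℓ p.1 p.2) :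
    Measurable fun q : (Fin N → Z) × Θ => empiricalRisk ℓ q.1 q.2 :=
  (Finset.measurable_sum _ fun i _ => hℓ.comp (by fun_prop :
    Measurable fun q : (Fin N → Z) × Θ => (q.2, q.1 i))).const_mul _

lemma measurable_uncurry_scaledGap (hℓ : Measurable fun p : Θ × Z => ℓ p.1 p.2) :
    Measurable (Function.uncurry (scaledGap (N := N) D ℓ)) :=
  (((measurable_trueRisk hℓ).comp measurable_snd).sub
    (measurable_uncurry_empiricalRisk hℓ)).const_mul _

lemma integral_scaledGap {Q : Measure Θ} [IsFiniteMeasure Q]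
    (hℓ : Measurable fun p : Θ × Z => ℓ p.1 p.2) (hℓ01 : ∀ h z, ℓ h z ∈ Set.Icc (0 : ℝ) 1)
    (S : Fin N → Z) :
    ∫ h, scaledGap D ℓ S h ∂Q =
      2 * √N * (∫ h, trueRisk D ℓ h ∂Q - ∫ h, empiricalRisk ℓ S h ∂Q) := by
  have hR : Integrable (trueRisk D ℓ) Q :=
    .of_mem_Icc 0 1 (measurable_trueRisk hℓ).aemeasurable
      (.of_forall fun h => trueRisk_mem_Icc (hℓ.comp measurable_prodMk_left) (hℓ01 h))
  have hE : Integrable (empiricalRisk ℓ S) Q :=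
    .of_mem_Icc 0 1 ((measurable_uncurry_empiricalRisk hℓ).comp measurable_prodMk_left).aemeasurable
      (.of_forall fun h => empiricalRisk_mem_Icc (hℓ01 h) S)
  simp only [scaledGap]
  rw [integral_const_mul, integral_sub hR hE]

end Risk

/-- **PAC-Bayes bound.** For a data distribution `D` on `Z`, a `[0,1]`-valued jointly
measurable loss `ℓ`, a prior `P` on the hypothesis space `Θ` and `δ ∈ (0,1)`, with
probability at least `1 − δ` over an i.i.d. sample `S` of size `N` from `D`,
simultaneously for every posterior probability measure `Q` on `Θ` (with the inequality
interpreted as trivially true when `KL(Q ‖ P) = ∞`):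
`E_{h∼Q}[R(h)] ≤ E_{h∼Q}[R̂_S(h)] + √((KL(Q‖P) + log(2√N/δ)) / (2N))`. -/
theorem pac_bayes_bound
    {Z : Type*} [MeasurableSpace Z] {Θ : Type*} [MeasurableSpace Θ]
    (D : Measure Z) [IsProbabilityMeasure D]
    (ℓ : Θ → Z → ℝ) (hℓmeas : Measurable fun p : Θ × Z => ℓ p.1 p.2)
    (hℓ01 : ∀ h z, ℓ h z ∈ Set.Icc (0 : ℝ) 1)
    (P : Measure Θ) [IsProbabilityMeasure P]
    (δ : ℝ) (hδ : δ ∈ Set.Ioo (0 : ℝ) 1)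
    (N : ℕ) (hN : 0 < N) :
    ENNReal.ofReal (1 - δ) ≤
      (Measure.pi fun _ : Fin N => D)
        {S : Fin N → Z | ∀ Q : Measure Θ, IsProbabilityMeasure Q → klDiv Q P ≠ ⊤ →
          ∫ h, (∫ z, ℓ h z ∂D) ∂Q ≤
            (∫ h, (1 / (N : ℝ)) * ∑ i : Fin N, ℓ h (S i) ∂Q) +
              Real.sqrt (((klDiv Q P).toReal +
                Real.log (2 * Real.sqrt N / δ)) / (2 * N))} := by
  have hℓh : ∀ h, Measurable (ℓ h) := fun h => hℓmeas.comp measurable_prodMk_left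
  have hN1 : (1 : ℝ) ≤ N := by exact_mod_cast hN
  have hb : √3 ≤ 2 * √N :=
    (sqrt_le_left (by positivity)).2 (by rw [mul_pow, sq_sqrt (by positivity)]; linarith)
  refine (one_sub_le_measure_forall_integral_le_sqrt_klDiv P (measurable_uncurry_scaledGap hℓmeas)
    (fun h => hasSubgaussianMGF_scaledGap (D := D) hN (hℓh h) (hℓ01 h)) hb
    (fun S h => abs_scaledGap_le (hℓh h) (hℓ01 h) S) hδ.1).trans (measure_mono ?_)
  intro S hS Q hQ hKL
  have hgap := hS Q hQ hKL
  rw [integral_scaledGap hℓmeas hℓ01 S] at hgap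
  set K := (klDiv Q P).toReal + log (2 * √N / δ)
  have hscale : √(2 * K) = 2 * √N * √(K / (2 * N)) := by
    have hK : 2 * K = (2 * √N) ^ 2 * (K / (2 * N)) := by
      rw [mul_pow, sq_sqrt (by positivity)]
      field_simp
    rw [hK, sqrt_mul (sq_nonneg _), sqrt_sq (by positivity)]
  rw [hscale] at hgap
  exact sub_le_iff_le_add'.1 (le_of_mul_le_mul_left hgap (by positivity))
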